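/- Let 1 < m < |n|. Every injective endomorphism of B(m,n) has infinitely many twisted conjugacy classes. In particular, the induced endomorphism on the quotient ℤ (from the exact sequence 0 → K → B(m,n) → ℤ → 1 given by the a-exponent sum) must be the identity. -/

import Mathlib

/-- The defining relation of the Baumslag-Solitar group `B(m,n)`:
`a⁻¹ bᵐ a = bⁿ`, where `a` is `FreeGroup.of false` and `b` is `FreeGroup.of true`. -/
def BSrel (m n : ℤ) : Set (FreeGroup Bool) :=
  {(FreeGroup.of false)⁻¹ * (FreeGroup.of true) ^ m * FreeGroup.of false *
    ((FreeGroup.of true) ^ n)⁻¹}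

/-- The Baumslag-Solitar group `B(m,n) = ⟨a, b | a⁻¹ bᵐ a = bⁿ⟩`. -/
abbrev BS (m n : ℤ) : Type := PresentedGroup (BSrel m n)

/-- The generator `a` of `B(m,n)`. -/
def BSa (m n : ℤ) : BS m n := PresentedGroup.of false

/-- The generator `b` of `B(m,n)`. -/
def BSb (m n : ℤ) : BS m n := PresentedGroup.of true

/-- Twisted conjugacy: `α` and `α'` are `φ`-conjugate if `α' = γ * α * φ(γ)⁻¹`
for some `γ`. -/
def twistedConj {G : Type*} [Group G] (φ : G →* G) (α α' : G) : Prop :=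
  ∃ γ : G, α' = γ * α * (φ γ)⁻¹

/-!
`B(m,n)` is the HNN extension of `ℤ = ⟨b⟩` with stable letter `a`. In an HNN extension, a
cyclically reduced word with `ℓ > 0` stable letters has `k`-th power of length `kℓ`, while
conjugation changes lengths only by a bounded amount; so if `xᵐ` and `xⁿ` are conjugate with
`|m| ≠ |n|`, then `x` is conjugate into the base. Hence `φ(b)` is conjugate to some `bᵏ`, and after
composing with an inner automorphism `φ(a)⁻¹ bᵏᵐ φ(a) = bᵏⁿ`. Now let `B(m,n)` act on `ℚ` with
`b` the translation by `1` and `a` the multiplication by `m/n`: the linear part of `g` is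
`(m/n)^e`, with `e` the `a`-exponent sum of `g`, so the last relation forces `φ(a)` to have exponent
sum `1`. Thus `φ` preserves the exponent sum, which is then a twisted conjugacy invariant taking
infinitely many values.
-/

theorem infinite_quot_twistedConj_of_comp_eq {G H : Type*} [Group G] [CommGroup H] [Infinite H]
    {φ : G →* G} {π : G →* H} (hπ : Function.Surjective π) (hφ : π.comp φ = π) :
    Infinite (Quot (twistedConj φ)) := by
  have invariant : ∀ x y, twistedConj φ x y → π x = π y := by
    rintro x _ ⟨γ, rfl⟩
    have hγ : π (φ γ) = π γ := DFunLike.congr_fun hφ γ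
    rw [map_mul, map_mul, map_inv, hγ, mul_inv_cancel_comm]
  exact .of_surjective (Quot.lift π invariant) (.of_comp (g := Quot.mk _) hπ)

theorem isConj_zpow_mul_self {G : Type*} [Group G] {x : G} {m n : ℤ}
    (h : IsConj (x ^ m) (x ^ n)) : IsConj (x ^ (m * m)) (x ^ (n * n)) := by
  obtain ⟨c, hc⟩ := h
  refine ⟨c * c, (?_ : SemiconjBy (c : G) (x ^ (m * n)) _).mul_left (?_ : SemiconjBy _ _ _)⟩
  · simpa only [← zpow_mul] using hc.zpow_right n
  · simpa only [← zpow_mul, mul_comm n m] using hc.zpow_right m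

/-- Words in an HNN extension: the pair `(u, g)` stands for the syllable `t ^ u * g`, as in
`HNNExtension.NormalWord.ReducedWord.toList`. -/
abbrev HNNWord (G : Type*) : Type _ := List (ℤˣ × G)

namespace HNNWord

open HNNExtension HNNExtension.NormalWord

variable {G : Type*} [Group G] {A B : Subgroup G} {φ : A ≃* B}

variable (φ) in
/-- The element of the HNN extension spelled by a word. -/
def prod (l : HNNWord G) : HNNExtension G A B φ :=
  (l.map fun x => t ^ (x.1 : ℤ) * of x.2).prod

variable (A B) in
/-- No cancellation occurs between two consecutive syllables: they do not form
`t ^ u * g * t ^ (-u)` with `g` in the associated subgroup. -/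
def NoCancel (x y : ℤˣ × G) : Prop :=
  x.2 ∈ toSubgroup A B x.1 → x.1 = y.1

variable (A B) in
/-- Reduced words, the hypothesis of Britton's lemma. -/
def IsReduced (l : HNNWord G) : Prop :=
  l.IsChain (NoCancel A B)

variable (A B) in
/-- Words that are reduced when read cyclically; compare `FreeGroup.IsCyclicallyReduced`. -/
def IsCyclicallyReduced (l : HNNWord G) : Prop :=
  IsReduced A B l ∧ ∀ x ∈ l.getLast?, ∀ y ∈ l.head?, NoCancel A B x y

@[simp]
theorem prod_nil : prod φ [] = 1 := rfl

@[simp]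
theorem prod_cons (x : ℤˣ × G) (l : HNNWord G) :
    prod φ (x :: l) = t ^ (x.1 : ℤ) * of x.2 * prod φ l := by
  simp [prod]

@[simp]
theorem prod_append (l l' : HNNWord G) : prod φ (l ++ l') = prod φ l * prod φ l' := by
  simp [prod]

theorem prod_flatten_replicate (k : ℕ) (l : HNNWord G) :
    prod φ (List.replicate k l).flatten = prod φ l ^ k := by
  induction k with
  | zero => simp
  | succ k ih => rw [pow_succ', List.replicate_succ, List.flatten_cons, prod_append, ih]

theorem isConj_prod_append_comm (l l' : HNNWord G) :
    IsConj (prod φ (l ++ l')) (prod φ (l' ++ l)) :=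
  isConj_iff.2 ⟨(prod φ l)⁻¹, by simp⟩

variable (φ) in
theorem exists_prod_pair_eq_of {x y : ℤˣ × G} (h : ¬ NoCancel A B x y) :
    ∃ g : G, prod φ [x, y] = of g := by
  obtain ⟨u, a⟩ := x
  obtain ⟨v, b⟩ := y
  simp only [NoCancel, Classical.not_imp] at h
  obtain ⟨ha, huv⟩ := h
  rcases Int.units_eq_one_or u with rfl | rfl <;> rcases Int.units_eq_one_or v with rfl | rfl
  · exact absurd rfl huv
  · refine ⟨φ ⟨a, ha⟩ * b, ?_⟩
    rw [map_mul, equiv_eq_conj]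
    simp [mul_assoc]
  · refine ⟨φ.symm ⟨a, ha⟩ * b, ?_⟩
    rw [map_mul, equiv_symm_eq_conj]
    simp [mul_assoc]
  · exact absurd rfl huv

theorem IsCyclicallyReduced.isReduced_flatten_replicate {l : HNNWord G}
    (h : IsCyclicallyReduced A B l) (k : ℕ) : IsReduced A B (List.replicate k l).flatten := by
  rcases eq_or_ne l [] with rfl | hl
  · simp [IsReduced]
  · rw [IsReduced, List.isChain_flatten fun hmem => hl (List.eq_of_mem_replicate hmem).symm]
    refine ⟨fun l' hl' => ?_, List.isChain_replicate_of_rel k h.2⟩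
    rw [List.eq_of_mem_replicate hl']
    exact h.1

/-- The number of stable letters in the normal form of an element. By Britton's lemma it does not
depend on the transversals chosen to define the normal form. -/
noncomputable def syllableLength (x : HNNExtension G A B φ) : ℕ :=
  (NormalWord.equiv φ (Classical.arbitrary (TransversalPair G A B)) x).toList.length

theorem exists_eq_of_mul_prod (x : HNNExtension G A B φ) :
    ∃ (g : G) (l : HNNWord G), x = of g * prod φ l ∧ l.length = syllableLength x :=
  ⟨_, _, ((NormalWord.equiv φ _).symm_apply_apply x).symm, rfl⟩

theorem IsReduced.syllableLength_prod {l : HNNWord G} (h : IsReduced A B l) :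
    syllableLength (prod φ l) = l.length := by
  obtain ⟨w, hprod, hfst, -⟩ := ReducedWord.exists_normalWord_prod_eq φ
    (Classical.arbitrary (TransversalPair G A B)) ⟨1, l, h⟩
  have hw : w.prod φ = prod φ l := by rw [hprod]; simp [ReducedWord.prod, prod]
  rw [syllableLength, (Equiv.eq_symm_apply _).1 hw.symm]
  simpa using congrArg List.length hfst

theorem length_toList_unitsSMul_le {d : TransversalPair G A B} (u : ℤˣ) (w : NormalWord d) :
    (unitsSMul φ u w).toList.length ≤ w.toList.length + 1 := by
  rw [unitsSMul]
  split_ifs with hcancel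
  · cases w using consRecOn
    · simp [Cancels] at hcancel
    · simp only [unitsSMulWithCancel, consRecOn_cons, group_smul_toList, cons_toList,
        List.length_cons]
      omega
  · simp

theorem length_toList_prod_smul_le {d : TransversalPair G A B} (l : HNNWord G)
    (w : NormalWord d) : (prod φ l • w).toList.length ≤ l.length + w.toList.length := by
  induction l with
  | nil => simp
  | cons x l ih =>
    rw [prod_cons, mul_smul, mul_smul, t_pow_smul_eq_unitsSMul, of_smul_eq_smul]
    refine (length_toList_unitsSMul_le _ _).trans ?_
    rw [group_smul_toList, List.length_cons]
    omega

theorem syllableLength_mul_le (x y : HNNExtension G A B φ) :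
    syllableLength (x * y) ≤ syllableLength x + syllableLength y := by
  obtain ⟨g, l, hx, hl⟩ := exists_eq_of_mul_prod x
  rw [← hl, hx]
  change ((of g * prod φ l * y) • NormalWord.empty).toList.length ≤ _
  rw [mul_smul, mul_smul, of_smul_eq_smul, group_smul_toList]
  exact length_toList_prod_smul_le _ _

@[simp]
theorem syllableLength_of_mul (g : G) (x : HNNExtension G A B φ) :
    syllableLength (of g * x) = syllableLength x := by
  simp [syllableLength, NormalWord.equiv, mul_smul, of_smul_eq_smul]

theorem syllableLength_prod_le (l : HNNWord G) : syllableLength (prod φ l) ≤ l.length :=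
  length_toList_prod_smul_le _ _

theorem isReduced_of_length_le_syllableLength {l : HNNWord G}
    (h : l.length ≤ syllableLength (prod φ l)) : IsReduced A B l := by
  refine List.isChain_iff_forall_rel_of_append_cons_cons.2 fun {x y p q} hl => ?_
  by_contra hcancel
  obtain ⟨g, hg⟩ := exists_prod_pair_eq_of φ hcancel
  have hprod : prod φ l = prod φ p * (of g * prod φ q) := by
    rw [hl, ← hg]; simp [mul_assoc]
  have hle : syllableLength (prod φ l) ≤ p.length + q.length :=
    calc syllableLength (prod φ l)
        ≤ syllableLength (prod φ p) + syllableLength (of g * prod φ q) := by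
          rw [hprod]
          exact syllableLength_mul_le _ _
      _ = syllableLength (prod φ p) + syllableLength (prod φ q) := by rw [syllableLength_of_mul]
      _ ≤ p.length + q.length := by gcongr <;> exact syllableLength_prod_le _
  have hlen : l.length = p.length + (q.length + 2) := by simp [hl]
  omega

theorem isCyclicallyReduced_of_forall_isConj {l : HNNWord G}
    (h : ∀ z, IsConj (prod φ l) z → l.length ≤ syllableLength z) : IsCyclicallyReduced A B l := by
  refine ⟨isReduced_of_length_le_syllableLength (h _ (.refl _)), fun x hx y hy => ?_⟩
  obtain ⟨p, rfl⟩ := List.getLast?_eq_some_iff.1 hx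
  have hrot : IsReduced A B ([x] ++ p) := isReduced_of_length_le_syllableLength <| by
    simpa [add_comm] using h _ (isConj_prod_append_comm p [x])
  cases p with
  | nil =>
    obtain rfl : x = y := by simpa using hy
    exact fun _ => rfl
  | cons z p =>
    obtain rfl : z = y := by simpa using hy
    exact (List.isChain_cons_cons.1 hrot).1

theorem exists_isConj_of_or_isConj_prod (x : HNNExtension G A B φ) :
    (∃ g : G, IsConj x (of g)) ∨
      ∃ l : HNNWord G, l ≠ [] ∧ IsCyclicallyReduced A B l ∧ IsConj x (prod φ l) := by
  obtain ⟨y, hxy, hmin⟩ :=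
    exists_minimalFor_of_wellFoundedLT (IsConj x) syllableLength ⟨x, .refl x⟩
  obtain ⟨g, l, hy, hl⟩ := exists_eq_of_mul_prod y
  rcases List.eq_nil_or_concat l with rfl | ⟨p, ⟨u, a⟩, rfl⟩
  · exact .inl ⟨g, by simpa [hy] using hxy⟩
  · -- Conjugating by `g` moves the leading base element to the end of the last syllable.
    have hyl : IsConj y (prod φ (p ++ [(u, a * g)])) :=
      isConj_iff.2 ⟨(of g)⁻¹, by simp [hy, mul_assoc]⟩
    refine .inr ⟨p ++ [(u, a * g)], by simp,
      isCyclicallyReduced_of_forall_isConj (φ := φ) fun z hz => ?_, hxy.trans hyl⟩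
    have hyz : syllableLength y ≤ syllableLength z :=
      (le_total _ _).elim id (hmin (hxy.trans (hyl.trans hz)))
    simpa [← hl] using hyz

theorem IsCyclicallyReduced.syllableLength_prod_pow {l : HNNWord G}
    (h : IsCyclicallyReduced A B l) (k : ℕ) : syllableLength (prod φ l ^ k) = k * l.length := by
  rw [← prod_flatten_replicate, (h.isReduced_flatten_replicate k).syllableLength_prod]
  simp

theorem exists_syllableLength_pow_le_of_isConj {x y : HNNExtension G A B φ} (h : IsConj x y) :
    ∃ C, ∀ k : ℕ, syllableLength (y ^ k) ≤ syllableLength (x ^ k) + C := by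
  obtain ⟨c, rfl⟩ := isConj_iff.1 h
  refine ⟨syllableLength c + syllableLength c⁻¹, fun k => ?_⟩
  calc syllableLength ((c * x * c⁻¹) ^ k)
      = syllableLength (c * x ^ k * c⁻¹) := by rw [conj_pow]
    _ ≤ syllableLength c + syllableLength (x ^ k) + syllableLength c⁻¹ :=
        (syllableLength_mul_le _ _).trans (by gcongr; exact syllableLength_mul_le _ _)
    _ = syllableLength (x ^ k) + (syllableLength c + syllableLength c⁻¹) := by ring

theorem exists_isConj_of_of_isConj_pow {x : HNNExtension G A B φ} {p q : ℕ} (hpq : p ≠ q)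
    (h : IsConj (x ^ p) (x ^ q)) : ∃ g : G, IsConj x (of g) := by
  wlog hlt : p < q generalizing p q
  · exact this hpq.symm h.symm (by omega)
  refine (exists_isConj_of_or_isConj_prod x).resolve_right ?_
  rintro ⟨l, hl, hred, hxl⟩
  obtain ⟨C, hC⟩ := exists_syllableLength_pow_le_of_isConj
    (((hxl.pow p).symm.trans h).trans (hxl.pow q))
  have hbound : q * (C + 1) * l.length ≤ p * (C + 1) * l.length + C := by
    simpa only [← pow_mul, hred.syllableLength_prod_pow] using hC (C + 1)
  have hpos : 0 < l.length := List.length_pos_iff.2 hl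
  have hgap : (p + 1) * ((C + 1) * l.length) ≤ q * ((C + 1) * l.length) :=
    Nat.mul_le_mul_right _ hlt
  have hC_lt : C + 1 ≤ (C + 1) * l.length := Nat.le_mul_of_pos_right _ hpos
  linarith

theorem exists_isConj_of_of_isConj_zpow {x : HNNExtension G A B φ} {p q : ℤ} (hpq : |p| ≠ |q|)
    (h : IsConj (x ^ p) (x ^ q)) : ∃ g : G, IsConj x (of g) := by
  refine exists_isConj_of_of_isConj_pow (p := p.natAbs * p.natAbs) (q := q.natAbs * q.natAbs)
    (fun hsq => hpq ?_) ?_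
  · rw [Int.abs_eq_natAbs, Int.abs_eq_natAbs, Nat.mul_self_inj.1 hsq]
  · simpa only [← zpow_natCast, Int.natCast_mul, Int.natAbs_mul_self'] using isConj_zpow_mul_self h

end HNNWord

namespace BS

open Multiplicative

section Presentation

variable {m n : ℤ} {H : Type*} [Group H]

variable (m n) in
theorem semiconjBy_BSa : SemiconjBy (BSa m n) (BSb m n ^ n) (BSb m n ^ m) := by
  have rel := PresentedGroup.one_of_mem (rels := BSrel m n) (Set.mem_singleton _)
  simp only [map_mul, map_inv, map_zpow] at rel
  have conj : (BSa m n)⁻¹ * BSb m n ^ m * BSa m n = BSb m n ^ n := mul_inv_eq_one.1 rel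
  rw [SemiconjBy, ← conj]
  group

/-- The universal property of `B(m,n)`: the homomorphism sending `a` to `x` and `b` to `y`. -/
def lift (x y : H) (h : SemiconjBy x (y ^ n) (y ^ m)) : BS m n →* H :=
  PresentedGroup.toGroup (f := fun i : Bool => if i then y else x) <| by
    rintro _ rfl
    have conj : x⁻¹ * y ^ m * x = y ^ n := by rw [mul_assoc, ← h.eq, inv_mul_cancel_left]
    simp [conj]

@[simp]
theorem lift_BSa (x y : H) (h : SemiconjBy x (y ^ n) (y ^ m)) : lift x y h (BSa m n) = x := by
  simp [lift, BSa]

@[simp]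
theorem lift_BSb (x y : H) (h : SemiconjBy x (y ^ n) (y ^ m)) : lift x y h (BSb m n) = y := by
  simp [lift, BSb]

theorem hom_ext {f g : BS m n →* H} (ha : f (BSa m n) = g (BSa m n))
    (hb : f (BSb m n) = g (BSb m n)) : f = g :=
  PresentedGroup.ext fun i => by cases i <;> assumption

end Presentation

section HNN

variable {m n : ℤ}

/-- The isomorphism `bⁿ ↦ bᵐ` between the subgroups of `⟨b⟩` associated by the stable letter. -/
noncomputable def powRangeEquiv (hm : m ≠ 0) (hn : n ≠ 0) :
    (zpowGroupHom n : Multiplicative ℤ →* Multiplicative ℤ).range ≃*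
      (zpowGroupHom m : Multiplicative ℤ →* Multiplicative ℤ).range :=
  (MonoidHom.ofInjective (zpow_left_injective hn)).symm.trans
    (MonoidHom.ofInjective (zpow_left_injective hm))

theorem powRangeEquiv_zpow (hm : m ≠ 0) (hn : n ≠ 0) (x : Multiplicative ℤ) :
    (powRangeEquiv hm hn ⟨x ^ n, x, rfl⟩ : Multiplicative ℤ) = x ^ m := by
  have hx : (⟨x ^ n, x, rfl⟩ : (zpowGroupHom n : Multiplicative ℤ →* Multiplicative ℤ).range) =
      MonoidHom.ofInjective (zpow_left_injective hn) x := rfl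
  rw [hx, powRangeEquiv, MulEquiv.trans_apply, MulEquiv.symm_apply_apply]
  rfl

theorem semiconjBy_t_of (hm : m ≠ 0) (hn : n ≠ 0) (x : Multiplicative ℤ) :
    SemiconjBy (HNNExtension.t : HNNExtension _ _ _ (powRangeEquiv hm hn))
      (HNNExtension.of x ^ n) (HNNExtension.of x ^ m) := by
  have h := HNNExtension.t_mul_of (φ := powRangeEquiv hm hn) ⟨x ^ n, x, rfl⟩
  rwa [powRangeEquiv_zpow, map_zpow, map_zpow] at h

theorem BSa_mul_zpowersHom_BSb (hm : m ≠ 0) (hn : n ≠ 0)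
    (x : (zpowGroupHom n : Multiplicative ℤ →* Multiplicative ℤ).range) :
    BSa m n * zpowersHom _ (BSb m n) x =
      zpowersHom _ (BSb m n) (powRangeEquiv hm hn x : Multiplicative ℤ) * BSa m n := by
  obtain ⟨_, x, rfl⟩ := x
  simp only [zpowGroupHom_apply, powRangeEquiv_zpow, map_zpow]
  simpa only [zpowersHom_apply, ← zpow_mul, mul_comm] using
    ((semiconjBy_BSa m n).zpow_right x.toAdd).eq

/-- `B(m,n)` as an HNN extension of `⟨b⟩`, with stable letter `a`. -/
noncomputable def mulEquivHNN (hm : m ≠ 0) (hn : n ≠ 0) :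
    BS m n ≃* HNNExtension (Multiplicative ℤ) _ _ (powRangeEquiv hm hn) :=
  MonoidHom.toMulEquiv
    (lift HNNExtension.t (HNNExtension.of (ofAdd 1)) (semiconjBy_t_of hm hn _))
    (HNNExtension.lift (zpowersHom _ (BSb m n)) (BSa m n) (BSa_mul_zpowersHom_BSb hm hn))
    (hom_ext (by simp) (by simp))
    (HNNExtension.hom_ext (by ext; simp) (by simp))

theorem mulEquivHNN_symm_of (hm : m ≠ 0) (hn : n ≠ 0) (x : Multiplicative ℤ) :
    (mulEquivHNN hm hn).symm (HNNExtension.of x) = BSb m n ^ x.toAdd := by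
  simp [mulEquivHNN]

theorem exists_isConj_BSb_zpow (hm : m ≠ 0) (hn : n ≠ 0) {p q : ℤ} (hpq : |p| ≠ |q|)
    {x : BS m n} (h : IsConj (x ^ p) (x ^ q)) : ∃ k : ℤ, IsConj x (BSb m n ^ k) := by
  let e := mulEquivHNN hm hn
  obtain ⟨k, hk⟩ := HNNWord.exists_isConj_of_of_isConj_zpow (x := e x) hpq <| by
    simpa using e.toMonoidHom.map_isConj h
  refine ⟨k.toAdd, ?_⟩
  simpa [e, mulEquivHNN_symm_of] using e.symm.toMonoidHom.map_isConj hk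

end HNN

section ExponentSum

variable (m n : ℤ)

/-- The `a`-exponent sum; its kernel is the subgroup `K` of the paper. -/
def expSum : BS m n →* Multiplicative ℤ :=
  lift (ofAdd 1) 1 (by simp)

@[simp]
theorem expSum_BSa : expSum m n (BSa m n) = ofAdd 1 := lift_BSa ..

@[simp]
theorem expSum_BSb : expSum m n (BSb m n) = 1 := lift_BSb ..

theorem expSum_surjective : Function.Surjective (expSum m n) := fun z =>
  ⟨BSa m n ^ z.toAdd, by rw [map_zpow, expSum_BSa, ← ofAdd_zsmul]; simp⟩

end ExponentSum

section AffineAction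

variable {m n : ℤ} (hm : m ≠ 0) (hn : n ≠ 0)

/-- The ratio by which `a` scales `ℚ` in the affine action of `B(m,n)`. -/
def ratio : ℚˣ := Units.mk0 (m / n) (by positivity)

/-- The action of `B(m,n)` on the affine line over `ℚ` in which `a` is the homothety `x ↦ (m/n) x`
and `b` is the translation `x ↦ x + 1`. -/
noncomputable def affineAction : BS m n →* (ℚ ≃ᵃ[ℚ] ℚ) :=
  lift (DistribMulAction.toModuleAut ℚ ℚ (ratio hm hn)).toAffineEquiv
    (AffineEquiv.constVAdd ℚ ℚ 1) <| by
      rw [← AffineEquiv.constVAdd_zsmul, ← AffineEquiv.constVAdd_zsmul, SemiconjBy]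
      ext x
      have hn' : (n : ℚ) ≠ 0 := mod_cast hn
      simp [ratio, Units.smul_def, hn']

theorem affineAction_BSb_zpow (k : ℤ) (x : ℚ) : affineAction hm hn (BSb m n ^ k) x = k + x := by
  rw [map_zpow, affineAction, lift_BSb, ← AffineEquiv.constVAdd_zsmul]
  simp

theorem linear_affineAction (g : BS m n) (x : ℚ) :
    (affineAction hm hn g).linear x = ((m : ℚ) / n) ^ (expSum m n g).toAdd * x := by
  have hcomp : AffineEquiv.linearHom.comp (affineAction hm hn) =
      (DistribMulAction.toModuleAut ℚ ℚ).comp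
        ((zpowersHom ℚˣ (ratio hm hn)).comp (expSum m n)) := by
    apply hom_ext
    · have hlinear : (DistribMulAction.toLinearEquiv ℚ ℚ (ratio hm hn)).toAffineEquiv.linear =
          DistribMulAction.toLinearEquiv ℚ ℚ (ratio hm hn) := rfl
      simp [affineAction, hlinear]
    · ext
      simp [affineAction]
  have h := LinearEquiv.congr_fun (DFunLike.congr_fun hcomp g) x
  simpa [ratio, Units.smul_def] using h

include hm hn in
theorem zpow_expSum_mul_of_semiconjBy {g : BS m n} {i j : ℤ}
    (h : SemiconjBy g (BSb m n ^ i) (BSb m n ^ j)) :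
    ((m : ℚ) / n) ^ (expSum m n g).toAdd * i = j := by
  have hg : affineAction hm hn g (i : ℚ) =
      ((m : ℚ) / n) ^ (expSum m n g).toAdd * i + affineAction hm hn g 0 := by
    simpa [linear_affineAction] using (affineAction hm hn g).map_vadd 0 (i : ℚ)
  have happly := congrArg (fun f => affineAction hm hn f 0) h.eq
  simp only [map_mul, AffineEquiv.coe_mul, Function.comp_apply, affineAction_BSb_zpow, add_zero,
    hg] at happly
  exact add_right_cancel happly

include hm hn in
theorem BSb_ne_one : BSb m n ≠ 1 := fun h => by
  simpa [h] using affineAction_BSb_zpow hm hn 1 0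

include hm hn in
theorem expSum_eq_ofAdd_one_of_semiconjBy (hmn : |m| ≠ |n|) {k : ℤ} (hk : k ≠ 0) {g : BS m n}
    (h : SemiconjBy g (BSb m n ^ (k * n)) (BSb m n ^ (k * m))) : expSum m n g = ofAdd 1 := by
  have hmq : (m : ℚ) ≠ 0 := mod_cast hm
  have hnq : (n : ℚ) ≠ 0 := mod_cast hn
  have hkq : (k : ℚ) ≠ 0 := mod_cast hk
  have hscale : ((m : ℚ) / n) ^ (expSum m n g).toAdd = (m / n) ^ (1 : ℤ) := by
    have h' := zpow_expSum_mul_of_semiconjBy hm hn h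
    push_cast at h'
    rw [zpow_one, eq_div_iff hnq]
    exact mul_left_cancel₀ hkq (by linear_combination h')
  have habs : |(m : ℚ) / n| ≠ 1 := by
    rw [abs_div, Ne, div_eq_one_iff_eq (abs_ne_zero.2 hnq)]
    exact_mod_cast hmn
  exact toAdd.injective <| zpow_right_injective₀ (abs_pos.2 (div_ne_zero hmq hnq)) habs <| by
    simp only [← abs_zpow, hscale, toAdd_ofAdd]

end AffineAction

theorem expSum_comp_eq {m n : ℤ} (hm : m ≠ 0) (hn : n ≠ 0) (hmn : |m| ≠ |n|)
    {φ : BS m n →* BS m n} (hφ : φ (BSb m n) ≠ 1) : (expSum m n).comp φ = expSum m n := by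
  have hrel : SemiconjBy (φ (BSa m n)) (φ (BSb m n) ^ n) (φ (BSb m n) ^ m) := by
    simpa only [map_zpow] using (semiconjBy_BSa m n).map φ
  obtain ⟨k, hbk⟩ := exists_isConj_BSb_zpow hm hn hmn (IsConj.symm ⟨toUnits _, hrel⟩)
  have hk : k ≠ 0 := by
    rintro rfl
    exact hφ (isConj_one_left.1 (by simpa using hbk))
  apply hom_ext
  · obtain ⟨c, hc⟩ := hbk
    have hconj : SemiconjBy (c * φ (BSa m n) * (c : BS m n)⁻¹)
        (BSb m n ^ (k * n)) (BSb m n ^ (k * m)) := by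
      rw [zpow_mul, zpow_mul]
      exact ((hc.zpow_right m).mul_left hrel).mul_left (hc.zpow_right n).inv_symm_left
    simpa using expSum_eq_ofAdd_one_of_semiconjBy hm hn hmn hk hconj
  · have hb : expSum m n (φ (BSb m n)) = expSum m n (BSb m n ^ k) :=
      isConj_iff_eq.1 ((expSum m n).map_isConj hbk)
    simpa using hb

end BS

theorem BS_m_n_injective_reidemeister_infinite_general (m n : ℤ) (hm : m ≠ 0) (hn : n ≠ 0)
    (hmn : |m| ≠ |n|) (φ : BS m n →* BS m n) (hφ : φ (BSb m n) ≠ 1) :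
    Infinite (Quot (twistedConj φ)) ∧
      ∀ π : BS m n →* Multiplicative ℤ,
        π (BSa m n) = Multiplicative.ofAdd 1 → π (BSb m n) = 1 →
          π.comp φ = π := by
  have hcomp := BS.expSum_comp_eq hm hn hmn hφ
  refine ⟨infinite_quot_twistedConj_of_comp_eq (BS.expSum_surjective m n) hcomp, fun π ha hb => ?_⟩
  obtain rfl : π = BS.expSum m n := BS.hom_ext (by simpa using ha) (by simpa using hb)
  exact hcomp

/-- For `1 < m < |n|`, every injective endomorphism of `B(m,n)` has infinitely many
twisted conjugacy classes; in particular, the induced endomorphism on the quotient `ℤ`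
of the sequence `0 → K → B(m,n) → ℤ → 1` given by the `a`-exponent sum is the
identity. -/
theorem BS_m_n_injective_reidemeister_infinite (m n : ℤ) (hm : 1 < m) (hn : m < |n|)
    (φ : BS m n →* BS m n) (hφ : Function.Injective φ) :
    Infinite (Quot (twistedConj φ)) ∧
      ∀ π : BS m n →* Multiplicative ℤ,
        π (BSa m n) = Multiplicative.ofAdd 1 → π (BSb m n) = 1 →
          π.comp φ = π := by
  obtain ⟨hm0, hn0, hmn⟩ : m ≠ 0 ∧ n ≠ 0 ∧ |m| ≠ |n| := by grind
  exact BS_m_n_injective_reidemeister_infinite_general m n hm0 hn0 hmn φ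
    ((map_ne_one_iff φ hφ).2 (BS.BSb_ne_one hm0 hn0))
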